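/- arXiv:1412.3025 — 2 statements merged into one kernel-verified Lean document; each statement's English description precedes it below -/
import Mathlib

section
/- Let M be a right-cancellative monoid and E ⊆ M∖{1} a generating set. Then a factorization map η on (M,E) is a factorability structure if and only if it is a weak factorability structure. -/
/-- The word length of `m` with respect to the generating set `E`:
the least `n` such that `m` is a product of `n` elements of `E`. -/
noncomputable def wordLength {M : Type*} [Monoid M] (E : Set M) (m : M) : ℕ :=
  sInf {n | ∃ l : List M, (∀ x ∈ l, x ∈ E) ∧ l.length = n ∧ l.prod = m}

/-- `E` is a generating set of the monoid `M`. -/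
def IsGenSet {M : Type*} [Monoid M] (E : Set M) : Prop :=
  ∀ m : M, ∃ l : List M, (∀ x ∈ l, x ∈ E) ∧ l.prod = m

/-- The pair `(a, b)` is geodesic with respect to `E`. -/
noncomputable def Geodesic {M : Type*} [Monoid M] (E : Set M) (a b : M) : Prop :=
  wordLength E (a * b) = wordLength E a + wordLength E b

/-- A factorization map `η = (η̄, η′)` on `(M, E)`. -/
noncomputable def IsFactorizationMap {M : Type*} [Monoid M] (E : Set M)
    (η : M → M × M) : Prop :=
  (∀ m, (η m).1 * (η m).2 = m) ∧
  (∀ m, wordLength E m = wordLength E (η m).1 + wordLength E (η m).2) ∧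
  (∀ m, m ≠ 1 → (η m).2 ∈ E) ∧
  η 1 = (1, 1)

/-- The map `f₁ : M³ → M³` applying `η` to the product of the two right entries,
with triples written `(x₃, x₂, x₁)`. -/
def f1 {M : Type*} [Monoid M] (η : M → M × M) (p : M × M × M) : M × M × M :=
  (p.1, η (p.2.1 * p.2.2))

/-- The map `f₂ : M³ → M³` applying `η` to the product of the two left entries. -/
def f2 {M : Type*} [Monoid M] (η : M → M × M) (p : M × M × M) : M × M × M :=
  ((η (p.1 * p.2.1)).1, (η (p.1 * p.2.1)).2, p.2.2)

/-- The sum of the word lengths of the entries of a triple. -/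
noncomputable def tnorm {M : Type*} [Monoid M] (E : Set M) (p : M × M × M) : ℕ :=
  wordLength E p.1 + wordLength E p.2.1 + wordLength E p.2.2

/-- `η` is a factorability structure on `(M, E)`: it is a factorization map and the
three maps `f₁f₂f₁f₂`, `f₂f₁f₂`, `f₂f₁f₂f₁ : M³ → M³` are equal in the graded sense. -/
noncomputable def IsFactorable {M : Type*} [Monoid M] (E : Set M) (η : M → M × M) : Prop :=
  IsFactorizationMap E η ∧
  ∀ p : M × M × M,
    (f1 η (f2 η (f1 η (f2 η p))) = f2 η (f1 η (f2 η p)) ∧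
     f2 η (f1 η (f2 η p)) = f2 η (f1 η (f2 η (f1 η p)))) ∨
    (tnorm E (f1 η (f2 η (f1 η (f2 η p)))) < tnorm E p ∧
     tnorm E (f2 η (f1 η (f2 η p))) < tnorm E p ∧
     tnorm E (f2 η (f1 η (f2 η (f1 η p)))) < tnorm E p)

/-- `η` is a weak factorability structure on `(M, E)`. -/
noncomputable def IsWeaklyFactorable {M : Type*} [Monoid M] (E : Set M)
    (η : M → M × M) : Prop :=
  IsFactorizationMap E η ∧
  ∀ x : M, ∀ t ∈ E,
    Geodesic E (η x).2 t →
    Geodesic E (η x).1 (η ((η x).2 * t)).1 →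
    Geodesic E x t ∧
    (η (x * t)).2 = (η ((η x).2 * t)).2 ∧
    (η (x * t)).1 = (η x).1 * (η ((η x).2 * t)).1

/-- `η` satisfies the recognition principle. -/
def RecognitionPrinciple {M : Type*} [Monoid M] (E : Set M) (η : M → M × M) : Prop :=
  ∀ m : M, ∀ a ∈ E, (η (m * a) = (m, a) ↔ η ((η m).2 * a) = ((η m).2, a))


section WordLength

variable {M : Type*} [Monoid M] {E : Set M}

theorem wordLength_le_length {l : List M} (hl : ∀ x ∈ l, x ∈ E) :
    wordLength E l.prod ≤ l.length :=
  Nat.sInf_le ⟨l, hl, rfl, rfl⟩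

theorem IsGenSet.exists_length_eq_wordLength (hgen : IsGenSet E) (m : M) :
    ∃ l : List M, (∀ x ∈ l, x ∈ E) ∧ l.length = wordLength E m ∧ l.prod = m := by
  obtain ⟨l, hl, hm⟩ := hgen m
  exact Nat.sInf_mem (s := {n | ∃ l : List M, (∀ x ∈ l, x ∈ E) ∧ l.length = n ∧ l.prod = m})
    ⟨l.length, l, hl, rfl, hm⟩

theorem wordLength_one : wordLength E (1 : M) = 0 :=
  Nat.le_zero.mp (wordLength_le_length (l := []) (by simp))

theorem IsGenSet.wordLength_mul_le (hgen : IsGenSet E) (a b : M) :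
    wordLength E (a * b) ≤ wordLength E a + wordLength E b := by
  obtain ⟨l, hl, hla, rfl⟩ := hgen.exists_length_eq_wordLength a
  obtain ⟨k, hk, hkb, rfl⟩ := hgen.exists_length_eq_wordLength b
  rw [← hla, ← hkb, ← List.prod_append, ← List.length_append]
  refine wordLength_le_length fun x hx => ?_
  rcases List.mem_append.mp hx with h | h
  exacts [hl x h, hk x h]

theorem IsGenSet.eq_one_of_wordLength_eq_zero (hgen : IsGenSet E) {m : M}
    (h : wordLength E m = 0) : m = 1 := by
  obtain ⟨l, -, hlm, rfl⟩ := hgen.exists_length_eq_wordLength m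
  rw [h, List.length_eq_zero_iff] at hlm
  simp [hlm]

theorem IsGenSet.wordLength_of_mem (hgen : IsGenSet E) (h1 : (1 : M) ∉ E) {t : M} (ht : t ∈ E) :
    wordLength E t = 1 := by
  have hle : wordLength E t ≤ 1 := by
    simpa using wordLength_le_length (E := E) (l := [t]) (by simpa using ht)
  have hne : wordLength E t ≠ 0 := fun h => h1 (hgen.eq_one_of_wordLength_eq_zero h ▸ ht)
  omega

end WordLength

section Factorization

variable {M : Type*} [Monoid M] {E : Set M} {η : M → M × M}

theorem IsFactorizationMap.apply_of_mem (hη : IsFactorizationMap E η) (hgen : IsGenSet E)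
    (h1 : (1 : M) ∉ E) {t : M} (ht : t ∈ E) : η t = (1, t) := by
  have hN := hη.2.1 t
  rw [hgen.wordLength_of_mem h1 ht,
    hgen.wordLength_of_mem h1 (hη.2.2.1 t fun h => h1 (h ▸ ht))] at hN
  have hfst : (η t).1 = 1 := hgen.eq_one_of_wordLength_eq_zero (by omega)
  have hmul := hη.1 t
  rw [hfst, one_mul] at hmul
  exact Prod.ext hfst hmul

theorem IsFactorizationMap.apply_snd (hη : IsFactorizationMap E η) (hgen : IsGenSet E)
    (h1 : (1 : M) ∉ E) (m : M) : η (η m).2 = (1, (η m).2) := by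
  by_cases hm : m = 1
  · simp [hm, hη.2.2.2]
  · exact hη.apply_of_mem hgen h1 (hη.2.2.1 m hm)

/-- If `(x, y)` is geodesic, then so are `(η′(x), y)` and `(η̄(x), η̄(η′(x) * y))`. -/
theorem IsFactorizationMap.geodesic_pieces (hη : IsFactorizationMap E η) (hgen : IsGenSet E)
    {x y : M} (h : Geodesic E x y) :
    Geodesic E (η x).2 y ∧ Geodesic E (η x).1 (η ((η x).2 * y)).1 := by
  unfold Geodesic at *
  have hx := hη.2.1 x
  have hz := hη.2.1 ((η x).2 * y)
  have e₁ : x * y = (η x).1 * ((η x).2 * y) := by rw [← mul_assoc, hη.1]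
  have e₂ : x * y = (η x).1 * (η ((η x).2 * y)).1 * (η ((η x).2 * y)).2 := by
    rw [mul_assoc, hη.1, e₁]
  have i₁ := hgen.wordLength_mul_le (η x).1 ((η x).2 * y)
  have i₂ := hgen.wordLength_mul_le ((η x).1 * (η ((η x).2 * y)).1) (η ((η x).2 * y)).2
  have i₃ := hgen.wordLength_mul_le (η x).2 y
  have i₄ := hgen.wordLength_mul_le (η x).1 (η ((η x).2 * y)).1
  rw [← e₁] at i₁
  rw [← e₂] at i₂
  omega

/-- The defining property of a weak factorability structure holds for arbitrary right factors,
not only for generators. -/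
theorem IsWeaklyFactorable.geodesic_and_apply_mul (hw : IsWeaklyFactorable E η)
    (hgen : IsGenSet E) (h1 : (1 : M) ∉ E) (x y : M) (hy : Geodesic E (η x).2 y)
    (hxy : Geodesic E (η x).1 (η ((η x).2 * y)).1) :
    Geodesic E x y ∧
      η (x * y) = ((η x).1 * (η ((η x).2 * y)).1, (η ((η x).2 * y)).2) := by
  obtain ⟨hη, hw⟩ := hw
  induction hn : wordLength E y using Nat.strong_induction_on generalizing y with
  | _ n ih =>
    subst hn
    by_cases hy1 : y = 1
    · subst hy1
      simp [Geodesic, wordLength_one, hη.apply_snd hgen h1]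
    have htE := hη.2.2.1 y hy1
    have ht := hgen.wordLength_of_mem h1 htE
    have hmul := hη.1 y
    have hNy := hη.2.1 y
    generalize (η y).1 = w at *
    generalize (η y).2 = t at *
    subst hmul
    unfold Geodesic at hy hxy
    rw [← mul_assoc] at hy hxy
    have i₁ := hgen.wordLength_mul_le ((η x).2 * w) t
    have i₂ := hgen.wordLength_mul_le (η x).2 w
    have hgw : Geodesic E (η x).2 w := by unfold Geodesic; omega
    have hgt : Geodesic E ((η x).2 * w) t := by unfold Geodesic; omega
    obtain ⟨p₁, p₂⟩ := hη.geodesic_pieces hgen hgt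
    obtain ⟨-, q₂, q₁⟩ := hw _ t htE p₁ p₂
    rw [q₁] at hxy
    have i₃ := hgen.wordLength_mul_le (η x).1 (η ((η x).2 * w)).1
    have i₄ := hgen.wordLength_mul_le ((η x).1 * (η ((η x).2 * w)).1)
      (η ((η ((η x).2 * w)).2 * t)).1
    have p₂N : wordLength E _ = _ := p₂
    rw [← mul_assoc] at hxy
    have hxw : Geodesic E (η x).1 (η ((η x).2 * w)).1 := by unfold Geodesic; omega
    obtain ⟨g, e⟩ := ih (wordLength E w) (by omega) w hgw hxw rfl
    have r := hw (x * w) t htE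
    simp only [e] at r
    obtain ⟨r₀, r₂, r₁⟩ := r p₁ (by unfold Geodesic at *; omega)
    rw [← mul_assoc (η x).2 w t, q₁, q₂, ← mul_assoc, ← mul_assoc]
    refine ⟨?_, Prod.ext r₁ r₂⟩
    unfold Geodesic at *
    rw [← mul_assoc]
    omega

theorem IsWeaklyFactorable.apply_mul_of_geodesic (hw : IsWeaklyFactorable E η)
    (hgen : IsGenSet E) (h1 : (1 : M) ∉ E) {x y : M} (h : Geodesic E x y) :
    η (x * y) = ((η x).1 * (η ((η x).2 * y)).1, (η ((η x).2 * y)).2) :=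
  have hp := hw.1.geodesic_pieces hgen h
  (hw.geodesic_and_apply_mul hgen h1 x y hp.1 hp.2).2

/-- The last two letters of a normal form are again a normal form. -/
theorem IsWeaklyFactorable.apply_snd_fst_mul_snd (hw : IsWeaklyFactorable E η)
    (hrc : ∀ a b c : M, a * c = b * c → a = b) (hgen : IsGenSet E) (h1 : (1 : M) ∉ E) (m : M) :
    η ((η (η m).1).2 * (η m).2) = ((η (η m).1).2, (η m).2) := by
  have hg : Geodesic E (η m).1 (η m).2 := by
    unfold Geodesic
    rw [hw.1.1, hw.1.2.1 m]
  have h := hw.apply_mul_of_geodesic hgen h1 hg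
  rw [hw.1.1] at h
  have hsnd := (congrArg Prod.snd h).symm
  have hmul := hw.1.1 ((η (η m).1).2 * (η m).2)
  dsimp only at hsnd
  rw [hsnd] at hmul
  exact Prod.ext (hrc _ _ _ hmul) hsnd

theorem IsFactorizationMap.tnorm_f1_le (hη : IsFactorizationMap E η) (hgen : IsGenSet E)
    (p : M × M × M) : tnorm E (f1 η p) ≤ tnorm E p := by
  have := hη.2.1 (p.2.1 * p.2.2)
  have := hgen.wordLength_mul_le p.2.1 p.2.2
  simp only [tnorm, f1]
  omega

theorem IsFactorizationMap.mul_f1 (hη : IsFactorizationMap E η) (p : M × M × M) :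
    (f1 η p).1 * (f1 η p).2.1 * (f1 η p).2.2 = p.1 * p.2.1 * p.2.2 := by
  simp only [f1, mul_assoc, hη.1]

/-- On a geodesic triple, `f₂f₁f₂` computes the last two letters of the normal form of the
product. -/
theorem IsWeaklyFactorable.f2_f1_f2_of_geodesic (hw : IsWeaklyFactorable E η)
    (hgen : IsGenSet E) (h1 : (1 : M) ∉ E) {p : M × M × M}
    (hp : tnorm E p ≤ wordLength E (p.1 * p.2.1 * p.2.2)) :
    f2 η (f1 η (f2 η p)) =
      ((η (η (p.1 * p.2.1 * p.2.2)).1).1, (η (η (p.1 * p.2.1 * p.2.2)).1).2,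
        (η (p.1 * p.2.1 * p.2.2)).2) := by
  have hg : Geodesic E (p.1 * p.2.1) p.2.2 := by
    have := hgen.wordLength_mul_le (p.1 * p.2.1) p.2.2
    have := hgen.wordLength_mul_le p.1 p.2.1
    simp only [tnorm] at hp
    unfold Geodesic
    omega
  rw [hw.apply_mul_of_geodesic hgen h1 hg]
  rfl

/-- A triple whose norm is preserved by `f₂f₁f₂` is geodesic. -/
theorem IsWeaklyFactorable.geodesic_of_tnorm_le (hw : IsWeaklyFactorable E η)
    (hgen : IsGenSet E) (h1 : (1 : M) ∉ E) {p : M × M × M}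
    (hp : tnorm E p ≤ tnorm E (f2 η (f1 η (f2 η p)))) :
    tnorm E p ≤ wordLength E (p.1 * p.2.1 * p.2.2) := by
  obtain ⟨a, b, c⟩ := p
  simp only [tnorm, f1, f2] at *
  have := hw.1.2.1 (a * b)
  have := hw.1.2.1 ((η (a * b)).2 * c)
  have := hw.1.2.1 ((η (a * b)).1 * (η ((η (a * b)).2 * c)).1)
  have := hgen.wordLength_mul_le a b
  have := hgen.wordLength_mul_le (η (a * b)).2 c
  have := hgen.wordLength_mul_le (η (a * b)).1 (η ((η (a * b)).2 * c)).1
  have hg := (hw.geodesic_and_apply_mul hgen h1 (a * b) c (by unfold Geodesic; omega)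
    (by unfold Geodesic; omega)).1
  unfold Geodesic at hg
  omega

theorem IsWeaklyFactorable.isFactorable (hw : IsWeaklyFactorable E η)
    (hrc : ∀ a b c : M, a * c = b * c → a = b) (hgen : IsGenSet E) (h1 : (1 : M) ∉ E) :
    IsFactorable E η := by
  refine ⟨hw.1, fun p => ?_⟩
  have hle := hw.1.tnorm_f1_le hgen p
  by_cases hp : tnorm E p ≤ wordLength E (p.1 * p.2.1 * p.2.2)
  · left
    have hp' : tnorm E (f1 η p) ≤
        wordLength E ((f1 η p).1 * (f1 η p).2.1 * (f1 η p).2.2) := by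
      rw [hw.1.mul_f1]
      omega
    rw [hw.f2_f1_f2_of_geodesic hgen h1 hp, hw.f2_f1_f2_of_geodesic hgen h1 hp', hw.1.mul_f1]
    refine ⟨?_, rfl⟩
    simp only [f1, hw.apply_snd_fst_mul_snd hrc hgen h1]
  · right
    have hlt : tnorm E (f2 η (f1 η (f2 η p))) < tnorm E p := by
      by_contra! h
      exact hp (hw.geodesic_of_tnorm_le hgen h1 h)
    refine ⟨(hw.1.tnorm_f1_le hgen _).trans_lt hlt, hlt, ?_⟩
    by_contra! h
    have hg := hw.geodesic_of_tnorm_le hgen h1 (hle.trans h)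
    have hf := hw.f2_f1_f2_of_geodesic hgen h1 hg
    rw [hf, hw.1.mul_f1] at h
    refine hp (h.trans_eq ?_)
    simp only [tnorm]
    rw [← hw.1.2.1, ← hw.1.2.1]

theorem IsFactorable.isWeaklyFactorable (hf : IsFactorable E η) (hgen : IsGenSet E)
    (h1 : (1 : M) ∉ E) : IsWeaklyFactorable E η := by
  obtain ⟨hη, hf⟩ := hf
  refine ⟨hη, fun x t ht hg₁ hg₂ => ?_⟩
  unfold Geodesic at hg₁ hg₂
  have hN := hgen.wordLength_of_mem h1 ht
  have hx := hη.2.1 x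
  have hxt := hη.2.1 (x * t)
  have hz := hη.2.1 ((η x).2 * t)
  have hu := hη.2.1 ((η x).1 * (η ((η x).2 * t)).1)
  have hp := hf (x, t, 1)
  simp only [f1, f2, mul_one, hη.apply_snd hgen h1, hη.apply_of_mem hgen h1 ht, tnorm,
    wordLength_one] at hp
  rcases hp with ⟨-, he⟩ | ⟨-, -, hlt⟩
  · simp only [Prod.mk.injEq] at he
    obtain ⟨e₁, e₂, e₃⟩ := he
    have hfst : (η (x * t)).1 = (η x).1 * (η ((η x).2 * t)).1 := by
      rw [← hη.1 (η (x * t)).1, e₁, e₂, hη.1]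
    refine ⟨?_, e₃, hfst⟩
    unfold Geodesic
    rw [hfst, e₃] at hxt
    omega
  · omega

end Factorization

/-- Let `M` be a right-cancellative monoid and `E ⊆ M∖{1}` a generating set. Then a
factorization map `η` on `(M, E)` is a factorability structure if and only if it is a
weak factorability structure. -/
theorem factorable_iff_weaklyFactorable_of_rightCancellative
    {M : Type*} [Monoid M] (hrc : ∀ a b c : M, a * c = b * c → a = b)
    (E : Set M) (h1 : (1 : M) ∉ E) (hgen : IsGenSet E)
    (η : M → M × M) (hη : IsFactorizationMap E η) :
    IsFactorable E η ↔ IsWeaklyFactorable E η := by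
  exact ⟨fun hf => hf.isWeaklyFactorable hgen h1, fun hw => hw.isFactorable hrc hgen h1⟩
end

section
/- For every n ≥ 1 the following hold: (B(n)) for every Z ∈ F_{n−1}, the words 1·sh₁(Z)·I₁ⁿ and sh₁(Z)·I₁ⁿ are ∼-equivalent, i.e., represent the same element of Q_n'; (C(n)) for every L ∈ F_n, the words L·I₁ⁿ and M·I₁ⁿ are ∼-equivalent, where M is the word obtained from L by deleting all occurrences of the letter 1. -/
/-- `w` is a word of the free monoid `F_n` on the letters `{1, …, n}`. -/
def InF (n : ℕ) (w : List ℕ) : Prop := ∀ a ∈ w, 1 ≤ a ∧ a ≤ n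

/-- The congruence on a free monoid of words generated by a relation `r`. -/
inductive CongClosure (r : List ℕ → List ℕ → Prop) : List ℕ → List ℕ → Prop
  | rel (u v : List ℕ) {x y : List ℕ} : r x y → CongClosure r (u ++ x ++ v) (u ++ y ++ v)
  | refl (x : List ℕ) : CongClosure r x x
  | symm {x y : List ℕ} : CongClosure r x y → CongClosure r y x
  | trans {x y z : List ℕ} : CongClosure r x y → CongClosure r y z → CongClosure r x z

/-- The defining relations of `P_n`: `ab = ba` for `|a − b| ≥ 2`, and `aa = a`. -/
inductive PRel (n : ℕ) : List ℕ → List ℕ → Prop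
  | comm (a b : ℕ) : 1 ≤ a → a ≤ n → 1 ≤ b → b ≤ n → (a + 2 ≤ b ∨ b + 2 ≤ a) →
      PRel n [a, b] [b, a]
  | idem (a : ℕ) : 1 ≤ a → a ≤ n → PRel n [a, a] [a]

/-- The congruence `∼_P` on `F_n`. -/
def PCong (n : ℕ) : List ℕ → List ℕ → Prop := CongClosure (PRel n)

/-- The defining relations of `Q_n`: those of `P_n` together with
`k(k+1)k(k+1) = (k+1)k(k+1)` and `(k+1)k(k+1)k = (k+1)k(k+1)`. -/
inductive QRel (n : ℕ) : List ℕ → List ℕ → Prop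
  | ofP {x y : List ℕ} : PRel n x y → QRel n x y
  | braid1 (k : ℕ) : 1 ≤ k → k + 1 ≤ n → QRel n [k, k + 1, k, k + 1] [k + 1, k, k + 1]
  | braid2 (k : ℕ) : 1 ≤ k → k + 1 ≤ n → QRel n [k + 1, k, k + 1, k] [k + 1, k, k + 1]

/-- The congruence `∼_Q` on `F_n`. -/
def QCong (n : ℕ) : List ℕ → List ℕ → Prop := CongClosure (QRel n)

/-- The defining relations of `Q_n'`: those of `Q_n` together with the pairs `(kJ, J)`
for which there exists `I ∈ F_n` with `kIJ ∼_Q IJ`, `kI ∼_P Ik` and `k` not occurring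
in `I`. -/
inductive RRel (n : ℕ) : List ℕ → List ℕ → Prop
  | ofQ {x y : List ℕ} : QRel n x y → RRel n x y
  | absorb (k : ℕ) (I J : List ℕ) : 1 ≤ k → k ≤ n → InF n I → InF n J →
      QCong n ((k :: I) ++ J) (I ++ J) → PCong n (k :: I) (I ++ [k]) → k ∉ I →
      RRel n (k :: J) J

/-- The congruence `∼` on `F_n`; the quotient monoid `F_n/∼` is `Q_n'`. -/
def RCong (n : ℕ) : List ℕ → List ℕ → Prop := CongClosure (RRel n)

/-- The shift homomorphism `sh_k : F_{n−k} → F_n`, `i ↦ i + k`. -/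
def sh (k : ℕ) (w : List ℕ) : List ℕ := w.map (· + k)

/-- The word `I_a^b = a·(a+1)⋯b`. -/
def Iseg (a b : ℕ) : List ℕ := List.range' a (b + 1 - a)

namespace CongClosure

variable {r : List ℕ → List ℕ → Prop}

theorem of_rel {x y : List ℕ} (h : r x y) : CongClosure r x y := by
  simpa using rel [] [] h

theorem append_left (u : List ℕ) {x y : List ℕ} (h : CongClosure r x y) :
    CongClosure r (u ++ x) (u ++ y) := by
  induction h with
  | rel a b h => simpa using rel (u ++ a) b h
  | refl x => exact refl _
  | symm _ ih => exact ih.symm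
  | trans _ _ ih₁ ih₂ => exact ih₁.trans ih₂

theorem append_right (v : List ℕ) {x y : List ℕ} (h : CongClosure r x y) :
    CongClosure r (x ++ v) (y ++ v) := by
  induction h with
  | rel a b h => simpa using rel a (b ++ v) h
  | refl x => exact refl _
  | symm _ ih => exact ih.symm
  | trans _ _ ih₁ ih₂ => exact ih₁.trans ih₂

/-- The congruence generated by `r`, as a congruence of the free monoid. -/
def toCon (r : List ℕ → List ℕ → Prop) : Con (FreeMonoid ℕ) where
  r x y := CongClosure r x.toList y.toList
  iseqv := ⟨fun _ => refl _, symm, trans⟩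
  mul' h₁ h₂ := (append_right _ h₁).trans (append_left _ h₂)

end CongClosure

/-- Families of monoid elements, trivial beyond `n`, that satisfy the relations of `Q_n`. -/
structure QFamily {M : Type*} [Monoid M] (n : ℕ) (f : ℕ → M) : Prop where
  trivial : ∀ j, n < j → f j = 1
  idem : ∀ j, f j * f j = f j
  comm : ∀ i j, i + 2 ≤ j → Commute (f i) (f j)
  braid_left : ∀ k, f k * f (k + 1) * f k * f (k + 1) = f (k + 1) * f k * f (k + 1)
  braid_right : ∀ k, f (k + 1) * f k * f (k + 1) * f k = f (k + 1) * f k * f (k + 1)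

/-- A word in the letters `k, …, k + m - 1`. When `n < k + m`, it represents the zero element
of the submonoid of `Q_n` generated by the letters that are at least `k`. -/
def zeroWord : ℕ → ℕ → List ℕ
  | 0, _ => []
  | m + 1, k => zeroWord m (k + 1) ++ k :: zeroWord m (k + 1)

theorem le_of_mem_zeroWord {m k j : ℕ} (h : j ∈ zeroWord m k) : k ≤ j := by
  induction m generalizing k with
  | zero => simp [zeroWord] at h
  | succ m ih =>
    simp only [zeroWord, List.mem_append, List.mem_cons] at h
    rcases h with h | h | h
    · have := ih h; omega
    · omega
    · have := ih h; omega

theorem Iseg_eq_nil {k n : ℕ} (h : n < k) : Iseg k n = [] := by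
  simp [Iseg, show n + 1 - k = 0 by omega]

theorem Iseg_eq_cons {k n : ℕ} (h : k ≤ n) : Iseg k n = k :: Iseg (k + 1) n := by
  simp [Iseg, show n + 1 - k = (n - k) + 1 by omega, List.range'_succ]

theorem inF_Iseg_one (n : ℕ) : InF n (Iseg 1 n) := by
  intro a ha
  simp only [Iseg, List.mem_range'_1] at ha
  omega

namespace QFamily

variable {M : Type*} [Monoid M] {n : ℕ} {f : ℕ → M}

theorem commute_prod (hf : QFamily n f) {i : ℕ} {L : List ℕ} (hL : ∀ j ∈ L, i + 2 ≤ j) :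
    Commute (f i) (L.map f).prod := by
  refine Commute.list_prod_right _ _ fun x hx => ?_
  obtain ⟨j, hj, rfl⟩ := List.mem_map.1 hx
  exact hf.comm _ _ (hL j hj)

theorem commute_zeroWord (hf : QFamily n f) {i m k : ℕ} (h : i + 2 ≤ k) :
    Commute (f i) ((zeroWord m k).map f).prod :=
  hf.commute_prod fun _ hj => h.trans (le_of_mem_zeroWord hj)

theorem prod_Iseg (hf : QFamily n f) (k : ℕ) :
    ((Iseg k n).map f).prod = f k * ((Iseg (k + 1) n).map f).prod := by
  rcases le_or_gt k n with h | h
  · simp [Iseg_eq_cons h]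
  · simp [Iseg_eq_nil h, Iseg_eq_nil (h.trans k.lt_succ_self), hf.trivial k h]

theorem prod_mul_of_absorbs {z : M} {L : List ℕ} (h : ∀ j ∈ L, f j * z = z) :
    (L.map f).prod * z = z := by
  induction L with
  | nil => simp
  | cons a L ih =>
    rw [List.map_cons, List.prod_cons, mul_assoc, ih fun j hj => h j (List.mem_cons_of_mem _ hj),
      h a List.mem_cons_self]

theorem mul_prod_of_absorbs {z : M} {L : List ℕ} (h : ∀ j ∈ L, z * f j = z) :
    z * (L.map f).prod = z := by
  induction L with
  | nil => simp
  | cons a L ih =>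
    rw [List.map_cons, List.prod_cons, ← mul_assoc, h a List.mem_cons_self,
      ih fun j hj => h j (List.mem_cons_of_mem _ hj)]

theorem zeroWord_absorbs (hf : QFamily n f) {m k : ℕ} (h : n < k + m) {j : ℕ} (hj : k ≤ j) :
    f j * ((zeroWord m k).map f).prod = ((zeroWord m k).map f).prod ∧
      ((zeroWord m k).map f).prod * f j = ((zeroWord m k).map f).prod := by
  induction m generalizing k j with
  | zero => simp [zeroWord, hf.trivial j (by omega)]
  | succ m ih =>
    simp only [zeroWord, List.map_append, List.map_cons, List.prod_append, List.prod_cons]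
    rcases hj.lt_or_eq with hj | rfl
    · obtain ⟨h₁, h₂⟩ := ih (k := k + 1) (j := j) (by omega) hj
      exact ⟨by rw [← mul_assoc, h₁], by rw [mul_assoc, mul_assoc, h₂]⟩
    · cases m with
      | zero => simp [zeroWord, hf.idem]
      | succ m =>
        have habs := fun j => ih (k := k + 1) (j := j) (by omega)
        set z := ((zeroWord (m + 1) (k + 1)).map f).prod with hz
        set w := ((zeroWord m (k + 2)).map f).prod with hw
        set x := f k
        set y := f (k + 1)
        have hzw : z = w * (y * w) := by simp [hz, hw, y, zeroWord]
        have hc : x * w = w * x := hf.commute_zeroWord le_rfl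
        have hyz : y * z = z := (habs _ le_rfl).1
        have hzy : z * y = z := (habs _ le_rfl).2
        have hwz : w * z = z := prod_mul_of_absorbs fun j hj =>
          (habs j (by have := le_of_mem_zeroWord hj; omega)).1
        have hzw' : z * w = z := mul_prod_of_absorbs fun j hj =>
          (habs j (by have := le_of_mem_zeroWord hj; omega)).2
        have hl : z * (x * z) = w * (y * (x * z)) := by
          conv_lhs => rw [hzw]
          rw [mul_assoc, mul_assoc, ← mul_assoc w x, ← hc, mul_assoc x, ← hzw, hwz]
        have hr : z * (x * z) = z * x * y * w := by
          conv_lhs => rw [← mul_assoc]; arg 2; rw [hzw]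
          rw [mul_assoc, ← mul_assoc x w, hc]
          simp only [← mul_assoc]
          rw [hzw']
        constructor
        · calc x * (z * (x * z)) = x * w * (y * (x * z)) := by rw [hl, mul_assoc]
            _ = w * (x * y * x * y) * z := by
              rw [hc]; conv_lhs => rw [← hyz]
              simp only [mul_assoc]
            _ = z * (x * z) := by
              rw [hf.braid_left, hl]; simp only [mul_assoc]
              rw [show f (k + 1) * z = z from hyz]
        · calc z * (x * z) * x = z * (y * x * y * x) * w := by
                rw [hr, mul_assoc _ w, ← hc]; conv_lhs => rw [← hzy]
                simp only [mul_assoc]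
            _ = z * (x * z) := by
              rw [hf.braid_right, hr]; simp only [← mul_assoc]
              rw [show z * f (k + 1) = z from hzy]

theorem zeroWord_mul_prod (hf : QFamily n f) {m k : ℕ} (h : n < k + m) {L : List ℕ}
    (hL : ∀ j ∈ L, k ≤ j) :
    ((zeroWord m k).map f).prod * (L.map f).prod = ((zeroWord m k).map f).prod :=
  mul_prod_of_absorbs fun j hj => (hf.zeroWord_absorbs h (hL j hj)).2

/-- If occurrences of `k` can be deleted at the end of `z k B` for every word `B` in larger
letters, then all later occurrences of `k` can be deleted. -/
theorem mul_filter_of_absorbs {z : M} {k : ℕ}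
    (h : ∀ B : List ℕ, (∀ j ∈ B, k + 1 ≤ j) →
      z * f k * (B.map f).prod * f k = z * f k * (B.map f).prod)
    {B : List ℕ} (hB : ∀ j ∈ B, k ≤ j) :
    z * f k * (B.map f).prod = z * f k * ((B.filter (· ≠ k)).map f).prod := by
  induction B using List.reverseRecOn with
  | nil => rfl
  | append_singleton B j ih =>
    have ih := ih fun i hi => hB i (List.mem_append_left _ hi)
    by_cases hj : j = k
    · subst hj
      have hfil : ∀ i ∈ B.filter (· ≠ j), j + 1 ≤ i := by
        intro i hi
        simp only [List.mem_filter, decide_eq_true_eq] at hi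
        have := hB i (List.mem_append_left _ hi.1)
        omega
      simpa [← mul_assoc, ih] using h _ hfil
    · simpa [hj, ← mul_assoc] using congrArg (· * f j) ih

theorem zeroWord_mul_absorbs (hf : QFamily n f) {m k : ℕ} (h : n < k + 1 + m) {B : List ℕ}
    (hB : ∀ j ∈ B, k + 1 ≤ j) :
    ((zeroWord m (k + 1)).map f).prod * f k * (B.map f).prod * f k =
      ((zeroWord m (k + 1)).map f).prod * f k * (B.map f).prod := by
  induction m generalizing k B with
  | zero =>
    have : (B.map f).prod = 1 := by
      simpa using mul_prod_of_absorbs (z := (1 : M)) (f := f) (L := B) fun j hj => by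
        simp [hf.trivial j (by have := hB j hj; omega)]
    simp [this, zeroWord, hf.idem]
  | succ m ih =>
    have habs := fun j (hj : k + 1 ≤ j) => (hf.zeroWord_absorbs (m := m + 1) h hj).2
    have hzw := hf.zeroWord_mul_prod (m := m + 1) h (L := zeroWord m (k + 2))
      fun j hj => by have := le_of_mem_zeroWord hj; omega
    set z := ((zeroWord (m + 1) (k + 1)).map f).prod
    induction B with
    | nil => simp [mul_assoc, hf.idem]
    | cons j B ihB =>
      have hj := hB j List.mem_cons_self
      have hB' : ∀ i ∈ B, k + 1 ≤ i := fun i hi => hB i (List.mem_cons_of_mem _ hi)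
      rw [List.map_cons, List.prod_cons]
      rcases hj.lt_or_eq with hj' | rfl
      · rw [← mul_assoc, mul_assoc z, (hf.comm k j hj').eq, ← mul_assoc, habs j hj]
        exact ihB hB'
      · set w := ((zeroWord m (k + 2)).map f).prod
        have hc : f k * w = w * f k := hf.commute_zeroWord le_rfl
        have hfil := mul_filter_of_absorbs (z := w) (k := k + 1)
          (fun B hB => ih (by omega) hB) hB'
        set C := B.filter (· ≠ k + 1) with hC
        have hCx : f k * (C.map f).prod = (C.map f).prod * f k := by
          refine hf.commute_prod fun i hi => ?_
          simp only [hC, List.mem_filter, decide_eq_true_eq] at hi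
          have := hB' i hi.1
          omega
        have hins : z * f k * (f (k + 1) * (B.map f).prod) =
            z * f k * f (k + 1) * (C.map f).prod := by
          calc z * f k * (f (k + 1) * (B.map f).prod)
              = z * (w * f k) * (f (k + 1) * (B.map f).prod) := by rw [← mul_assoc z w, hzw]
            _ = z * f k * (w * f (k + 1) * (B.map f).prod) := by
              rw [← hc]; simp only [mul_assoc]
            _ = z * (f k * w) * (f (k + 1) * (C.map f).prod) := by
              rw [hfil]; simp only [mul_assoc]
            _ = z * f k * f (k + 1) * (C.map f).prod := by
              rw [hc, ← mul_assoc z w, hzw]; simp only [mul_assoc]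
        rw [hins]
        calc z * f k * f (k + 1) * (C.map f).prod * f k
            = z * f (k + 1) * f k * f (k + 1) * f k * (C.map f).prod := by
              rw [mul_assoc _ _ (f k), ← hCx, habs _ le_rfl]; simp only [mul_assoc]
          _ = z * (f (k + 1) * f k * f (k + 1) * f k) * (C.map f).prod := by
              simp only [mul_assoc]
          _ = z * f (k + 1) * f k * f (k + 1) * (C.map f).prod := by
              rw [hf.braid_right]; simp only [mul_assoc]
          _ = z * f k * f (k + 1) * (C.map f).prod := by rw [habs _ le_rfl]

theorem zeroWord_mul_filter (hf : QFamily n f) {m k : ℕ} (h : n < k + 1 + m) {B : List ℕ}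
    (hB : ∀ j ∈ B, k ≤ j) :
    ((zeroWord m (k + 1)).map f).prod * f k * (B.map f).prod =
      ((zeroWord m (k + 1)).map f).prod * f k * ((B.filter (· ≠ k)).map f).prod :=
  mul_filter_of_absorbs (fun _ hB => hf.zeroWord_mul_absorbs h hB) hB

theorem mul_zeroWord_mul_Iseg (hf : QFamily n f) {m k : ℕ} (h : n < k + m) {W : List ℕ}
    (hW : ∀ j ∈ W, k + 1 ≤ j) :
    f k * (((zeroWord m (k + 2)).map f).prod * ((W.map f).prod * ((Iseg k n).map f).prod)) =
      ((zeroWord m (k + 2)).map f).prod * ((W.map f).prod * ((Iseg k n).map f).prod) := by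
  induction m generalizing k W with
  | zero => simp [hf.trivial k (by omega)]
  | succ m ih =>
    have habs := fun j (hj : k + 2 ≤ j) =>
      (hf.zeroWord_absorbs (m := m + 1) (k := k + 2) (by omega) hj).2
    have hzw := hf.zeroWord_mul_prod (m := m + 1) (k := k + 2) (by omega)
      (L := zeroWord m (k + 3)) fun j hj => by have := le_of_mem_zeroWord hj; omega
    have hcz : f k * ((zeroWord (m + 1) (k + 2)).map f).prod = _ :=
      hf.commute_zeroWord le_rfl
    have hdel := fun (B : List ℕ) hB => hf.zeroWord_mul_filter (m := m + 1) (k := k + 1)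
      (by omega) (B := B) hB
    set z := ((zeroWord (m + 1) (k + 2)).map f).prod
    induction W with
    | nil =>
      rw [List.map_nil, List.prod_nil, one_mul, ← mul_assoc, hcz, hf.prod_Iseg, mul_assoc,
        ← mul_assoc (f k), hf.idem]
    | cons j W ihW =>
      have hj := hW j List.mem_cons_self
      have hW' : ∀ i ∈ W, k + 1 ≤ i := fun i hi => hW i (List.mem_cons_of_mem _ hi)
      rw [List.map_cons, List.prod_cons]
      rcases hj.lt_or_eq with hj' | rfl
      · rw [mul_assoc (f j), ← mul_assoc z, habs j hj']
        exact ihW hW'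
      · set w := ((zeroWord m (k + 3)).map f).prod
        have hcx : f k * w = w * f k := hf.commute_zeroWord (by omega)
        have hcy : f (k + 1) * w = w * f (k + 1) := hf.commute_zeroWord le_rfl
        have hdel := hdel W hW'
        set C := W.filter (· ≠ k + 1) with hC
        have hC2 : ∀ i ∈ C, k + 2 ≤ i := by
          intro i hi
          simp only [hC, List.mem_filter, decide_eq_true_eq] at hi
          have := hW' i hi.1
          omega
        have hCx : f k * (C.map f).prod = (C.map f).prod * f k := hf.commute_prod hC2
        have hE := ih (k := k + 1) (by omega) hC2
        set p := ((Iseg (k + 1) n).map f).prod with hp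
        have hmain : z * (f (k + 1) * (W.map f).prod * ((Iseg k n).map f).prod) =
            z * (f (k + 1) * f k * f (k + 1)) * (w * ((C.map f).prod * p)) := by
          calc z * (f (k + 1) * (W.map f).prod * ((Iseg k n).map f).prod)
              = z * f (k + 1) * (W.map f).prod * (f k * p) := by
                rw [hf.prod_Iseg]; simp only [mul_assoc, hp]
            _ = z * w * f (k + 1) * ((C.map f).prod * f k) * p := by
                rw [hdel, hzw]; simp only [mul_assoc]
            _ = z * (f (k + 1) * w) * f k * ((C.map f).prod * p) := by
                rw [← hCx, hcy]; simp only [mul_assoc]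
            _ = z * f (k + 1) * (f k * w) * ((C.map f).prod * p) := by
                rw [hcx]; simp only [mul_assoc]
            _ = z * f (k + 1) * f k * (w * ((C.map f).prod * p)) := by
                simp only [mul_assoc]
            _ = _ := by
                conv_lhs => rw [← show f (k + 1) * (w * _) = _ from hE]
                simp only [mul_assoc]
        rw [hmain, ← hf.braid_left, ← mul_assoc (f k), ← mul_assoc (f k), hcz]
        simp only [mul_assoc]
        rw [← mul_assoc (f k) (f k), hf.idem]

end QFamily

/-- The canonical family in the quotient `Q_n`, extended trivially outside `{1, …, n}`. -/
def letterQ (n a : ℕ) : (CongClosure.toCon (QRel n)).Quotient :=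
  if 1 ≤ a ∧ a ≤ n then ((FreeMonoid.of a : FreeMonoid ℕ) : (CongClosure.toCon (QRel n)).Quotient)
  else 1

theorem prod_letterQ (n : ℕ) (L : List ℕ) :
    (L.map (letterQ n)).prod = ((FreeMonoid.ofList (L.filter fun a => 1 ≤ a ∧ a ≤ n) :
      FreeMonoid ℕ) : (CongClosure.toCon (QRel n)).Quotient) := by
  induction L with
  | nil => rfl
  | cons a L ih =>
    by_cases h : 1 ≤ a ∧ a ≤ n
    · simp only [List.map_cons, List.prod_cons, ih, letterQ, h, and_self, if_true,
        List.filter_cons, decide_true, FreeMonoid.ofList_cons, Con.coe_mul]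
    · simp only [List.map_cons, List.prod_cons, ih, letterQ, h, if_false,
        List.filter_cons, decide_false, one_mul, Bool.false_eq_true]

theorem prod_letterQ_eq_iff {n : ℕ} {K L : List ℕ} :
    (K.map (letterQ n)).prod = (L.map (letterQ n)).prod ↔
      QCong n (K.filter fun a => 1 ≤ a ∧ a ≤ n) (L.filter fun a => 1 ≤ a ∧ a ≤ n) := by
  rw [prod_letterQ, prod_letterQ, Con.eq]
  rfl

theorem letterQ_of_rel {n : ℕ} {K L : List ℕ} (hK : InF n K) (hL : InF n L) (h : QRel n K L) :
    (K.map (letterQ n)).prod = (L.map (letterQ n)).prod := by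
  rw [prod_letterQ_eq_iff, List.filter_eq_self.2 (by simpa [InF] using hK),
    List.filter_eq_self.2 (by simpa [InF] using hL)]
  exact CongClosure.of_rel h

theorem letterQ_eq_one {n a : ℕ} (h : ¬(1 ≤ a ∧ a ≤ n)) : letterQ n a = 1 := if_neg h

theorem letterQ_eq_one_or {n k : ℕ} (h : ¬(1 ≤ k ∧ k + 1 ≤ n)) :
    letterQ n k = 1 ∨ letterQ n (k + 1) = 1 := by
  by_cases hk : 1 ≤ k
  · exact .inr (letterQ_eq_one (by omega))
  · exact .inl (letterQ_eq_one (by omega))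

theorem letterQ_idem (n j : ℕ) : letterQ n j * letterQ n j = letterQ n j := by
  by_cases h : 1 ≤ j ∧ j ≤ n
  · simpa using letterQ_of_rel (by simp [InF, h]) (by simp [InF, h])
      (.ofP (.idem j h.1 h.2))
  · simp [letterQ_eq_one h]

theorem qFamily_letterQ (n : ℕ) : QFamily n (letterQ n) where
  trivial j hj := letterQ_eq_one (by omega)
  idem := letterQ_idem n
  comm i j hij := by
    by_cases hi : 1 ≤ i ∧ i ≤ n
    · by_cases hj : 1 ≤ j ∧ j ≤ n
      · simpa [Commute, SemiconjBy] using letterQ_of_rel (by simp [InF, hi, hj])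
          (by simp [InF, hi, hj]) (.ofP (.comm i j hi.1 hi.2 hj.1 hj.2 (.inl hij)))
      · simp [letterQ_eq_one hj]
    · simp [letterQ_eq_one hi]
  braid_left k := by
    by_cases hk : 1 ≤ k ∧ k + 1 ≤ n
    · have hk' : k ≤ n := by omega
      simpa [mul_assoc] using letterQ_of_rel (by simp [InF, hk, hk']) (by simp [InF, hk, hk'])
        (.braid1 k hk.1 hk.2)
    · rcases letterQ_eq_one_or hk with h | h <;> simp [h, letterQ_idem]
  braid_right k := by
    by_cases hk : 1 ≤ k ∧ k + 1 ≤ n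
    · have hk' : k ≤ n := by omega
      simpa [mul_assoc] using letterQ_of_rel (by simp [InF, hk, hk']) (by simp [InF, hk, hk'])
        (.braid2 k hk.1 hk.2)
    · rcases letterQ_eq_one_or hk with h | h <;> simp [h, letterQ_idem]

theorem PCong.cons_comm {n k : ℕ} (hk : 1 ≤ k) {L : List ℕ} (hL : ∀ j ∈ L, k + 2 ≤ j ∧ j ≤ n) :
    PCong n (k :: L) (L ++ [k]) := by
  induction L with
  | nil => exact .refl _
  | cons a L ih =>
    have ha := hL a List.mem_cons_self
    have hswap : PCong n (k :: a :: L) (a :: k :: L) :=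
      CongClosure.rel (r := PRel n) [] L (.comm k a hk (by omega) (by omega) ha.2 (.inl ha.1))
    exact hswap.trans
      (CongClosure.append_left [a] (ih fun j hj => hL j (List.mem_cons_of_mem _ hj)))

theorem RCong.one_cons_absorb {n : ℕ} (hn : 1 ≤ n) {W : List ℕ}
    (hW : ∀ j ∈ W, 2 ≤ j ∧ j ≤ n) :
    RCong n (1 :: (W ++ Iseg 1 n)) (W ++ Iseg 1 n) := by
  have hI : ∀ j ∈ (zeroWord n 3).filter (fun a => 1 ≤ a ∧ a ≤ n), 3 ≤ j ∧ j ≤ n := by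
    intro j hj
    simp only [List.mem_filter, decide_eq_true_eq] at hj
    exact ⟨le_of_mem_zeroWord hj.1, hj.2.2⟩
  have hJ : InF n (W ++ Iseg 1 n) := by
    intro a ha
    rcases List.mem_append.1 ha with ha | ha
    · have := hW a ha; omega
    · exact inF_Iseg_one n a ha
  refine CongClosure.of_rel (.absorb 1 _ _ le_rfl hn
    (fun a ha => by have := hI a ha; omega) hJ ?_ (PCong.cons_comm le_rfl hI)
    (fun h => by have := hI 1 h; omega))
  have hJfil : (W ++ Iseg 1 n).filter (fun a => 1 ≤ a ∧ a ≤ n) = W ++ Iseg 1 n :=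
    List.filter_eq_self.2 fun a ha => by simpa using hJ a ha
  have key := (qFamily_letterQ n).mul_zeroWord_mul_Iseg (m := n) (k := 1) (by omega)
    (fun j hj => (hW j hj).1)
  have key' : ((1 :: (zeroWord n 3 ++ (W ++ Iseg 1 n))).map (letterQ n)).prod =
      ((zeroWord n 3 ++ (W ++ Iseg 1 n)).map (letterQ n)).prod := by
    simpa using key
  rw [prod_letterQ_eq_iff, List.filter_cons_of_pos (by simpa using hn), List.filter_append,
    hJfil] at key'
  exact key'

theorem RCong.delete_ones {n : ℕ} (hn : 1 ≤ n) {L : List ℕ} (hL : InF n L) :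
    RCong n (L ++ Iseg 1 n) (L.filter (fun a => a ≠ 1) ++ Iseg 1 n) := by
  induction L with
  | nil => exact .refl _
  | cons a L ih =>
    have hL' : InF n L := fun j hj => hL j (List.mem_cons_of_mem _ hj)
    have hstep := CongClosure.append_left [a] (ih hL')
    by_cases ha : a = 1
    · subst ha
      rw [List.filter_cons_of_neg (by simp)]
      refine hstep.trans (RCong.one_cons_absorb hn fun j hj => ?_)
      simp only [List.mem_filter, decide_eq_true_eq] at hj
      have := hL' j hj.1
      omega
    · rw [List.filter_cons_of_pos (by simpa using ha)]
      exact hstep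

/-- Statements B(n) and C(n): (B) for every `Z ∈ F_{n−1}`, `1·sh₁(Z)·I₁ⁿ ∼ sh₁(Z)·I₁ⁿ`
in `Q_n'`; (C) for every `L ∈ F_n`, `L·I₁ⁿ ∼ M·I₁ⁿ` in `Q_n'`, where `M` is obtained
from `L` by deleting all occurrences of the letter `1`. -/
theorem statement_B_and_C (n : ℕ) (hn : 1 ≤ n) :
    (∀ Z : List ℕ, InF (n - 1) Z →
      RCong n ([1] ++ sh 1 Z ++ Iseg 1 n) (sh 1 Z ++ Iseg 1 n)) ∧
    (∀ L : List ℕ, InF n L →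
      RCong n (L ++ Iseg 1 n) (L.filter (fun a => a ≠ 1) ++ Iseg 1 n)) := by
  refine ⟨fun Z hZ => ?_, fun L hL => RCong.delete_ones hn hL⟩
  simpa using RCong.one_cons_absorb hn (W := sh 1 Z) fun j hj => by
    obtain ⟨i, hi, rfl⟩ := List.mem_map.1 hj
    have := hZ i hi
    omega
end
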